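/- There exists n₁ ∈ ℕ such that for every n ≥ n₁ there exist permutations π₁, …, π_n of {1,…,n} such that every feasible schedule (load at most 1) for the routing instance I(π₁,…,π_n) — which has congestion C = n and dilation D = 2n+3 — has makespan strictly greater than (1 + 10⁻⁵)·(C + D). -/

import Mathlib

/-- A routing instance: a finite directed multigraph together with packets
`0,…,k-1`, where packet `i` is given a list of edges `path i`. -/
structure RInst where
  V : Type
  E : Type
  [fintE : Fintype E]
  src : E → V
  dst : E → V
  k : ℕ
  path : Fin k → List E

attribute [instance] RInst.fintE

namespace RInst

/-- The paths are directed paths (consecutive edges fit head-to-tail) and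
use no edge more than once. -/
def Valid (I : RInst) : Prop :=
  (∀ i, List.Chain' (fun e f => I.dst e = I.src f) (I.path i)) ∧
  (∀ i, (I.path i).Nodup)

/-- `σ i t` is the number of edges of `path i` traversed by time `t`. -/
def IsSchedule (I : RInst) (σ : Fin I.k → ℕ → ℕ) : Prop :=
  (∀ i, σ i 0 = 0) ∧
  (∀ i t, σ i (t + 1) = σ i t ∨ σ i (t + 1) = σ i t + 1) ∧
  (∀ i t, σ i t ≤ (I.path i).length)

/-- Packet `i` crosses edge `e` in time step `t+1`. -/
def Crosses (I : RInst) (σ : Fin I.k → ℕ → ℕ) (i : Fin I.k) (e : I.E) (t : ℕ) : Prop :=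
  σ i (t + 1) = σ i t + 1 ∧ (I.path i)[σ i t]? = some e

/-- The load of the schedule is at most `c`: in every time step every edge
is crossed by at most `c` packets. -/
def LoadLE (I : RInst) (σ : Fin I.k → ℕ → ℕ) (c : ℕ) : Prop :=
  ∀ (e : I.E) (t : ℕ), Nat.card {i : Fin I.k | I.Crosses σ i e t} ≤ c

/-- All packets have arrived by time `T` (i.e. the makespan is at most `T`). -/
def CompletedBy (I : RInst) (σ : Fin I.k → ℕ → ℕ) (T : ℕ) : Prop :=
  ∀ i, σ i T = (I.path i).length

/-- The congestion: the maximum number of paths using a common edge. -/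
noncomputable def congestion (I : RInst) : ℕ :=
  Finset.univ.sup fun e : I.E => Nat.card {i : Fin I.k | e ∈ I.path i}

/-- The dilation: the maximum length of a path. -/
noncomputable def dilation (I : RInst) : ℕ :=
  Finset.univ.sup fun i : Fin I.k => (I.path i).length

end RInst

/-! ### The lower-bound instance `I(π₁,…,π_n)` on the graph `G_n` -/

/-- Vertices of `G_n`: `s`, `s'`, `u_1,…,u_{n+1}`, `v_1,…,v_n`, `t`.
(`Fin (n+1)` indexes `u_1,…,u_{n+1}`, `Fin n` indexes `v_1,…,v_n`.) -/
def Vtx (n : ℕ) : Type := Unit ⊕ Unit ⊕ Fin (n + 1) ⊕ Fin n ⊕ Unit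

def Vtx.s {n : ℕ} : Vtx n := Sum.inl ()
def Vtx.s' {n : ℕ} : Vtx n := Sum.inr (Sum.inl ())
def Vtx.u {n : ℕ} (j : Fin (n + 1)) : Vtx n := Sum.inr (Sum.inr (Sum.inl j))
def Vtx.v {n : ℕ} (j : Fin n) : Vtx n := Sum.inr (Sum.inr (Sum.inr (Sum.inl j)))
def Vtx.t {n : ℕ} : Vtx n := Sum.inr (Sum.inr (Sum.inr (Sum.inr ())))

/-- Edges of `G_n`: `(s,s')`, the edges `(s',u_j)` for `1 ≤ j ≤ n`, the critical
edges `e_j = (u_j,v_j)` for `1 ≤ j ≤ n`, the back edges `(v_j,u_{j'})` for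
`j' ≠ j`, and `(u_{n+1},t)`. -/
def Edg (n : ℕ) : Type :=
  Unit ⊕ Fin n ⊕ Fin n ⊕ { p : Fin n × Fin (n + 1) // (p.1 : ℕ) ≠ (p.2 : ℕ) } ⊕ Unit

instance (n : ℕ) : Fintype (Edg n) := by unfold Edg; infer_instance
instance (n : ℕ) : DecidableEq (Edg n) := by unfold Edg; infer_instance

def Edg.start {n : ℕ} : Edg n := Sum.inl ()
def Edg.toU {n : ℕ} (j : Fin n) : Edg n := Sum.inr (Sum.inl j)
def Edg.crit {n : ℕ} (j : Fin n) : Edg n := Sum.inr (Sum.inr (Sum.inl j))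
def Edg.back {n : ℕ} (j : Fin n) (j' : Fin (n + 1)) (h : (j : ℕ) ≠ (j' : ℕ)) : Edg n :=
  Sum.inr (Sum.inr (Sum.inr (Sum.inl ⟨(j, j'), h⟩)))
def Edg.toT {n : ℕ} : Edg n := Sum.inr (Sum.inr (Sum.inr (Sum.inr ())))

def Edg.src {n : ℕ} : Edg n → Vtx n
  | Sum.inl _ => Vtx.s
  | Sum.inr (Sum.inl _) => Vtx.s'
  | Sum.inr (Sum.inr (Sum.inl j)) => Vtx.u j.castSucc
  | Sum.inr (Sum.inr (Sum.inr (Sum.inl p))) => Vtx.v p.1.1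
  | Sum.inr (Sum.inr (Sum.inr (Sum.inr _))) => Vtx.u (Fin.last n)

def Edg.dst {n : ℕ} : Edg n → Vtx n
  | Sum.inl _ => Vtx.s'
  | Sum.inr (Sum.inl j) => Vtx.u j.castSucc
  | Sum.inr (Sum.inr (Sum.inl j)) => Vtx.v j
  | Sum.inr (Sum.inr (Sum.inr (Sum.inl p))) => Vtx.u p.1.2
  | Sum.inr (Sum.inr (Sum.inr (Sum.inr _))) => Vtx.t

/-- The `u`-vertex visited after crossing the `(i+1)`-st critical edge on the
path of `π`: it is `u_{π(i+2)}` (0-based: `(π (i+1)).castSucc`), except after the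
last critical edge, where it is `u_{n+1}` (0-based: `Fin.last n`). -/
def nxt {n : ℕ} (π : Equiv.Perm (Fin n)) (i : Fin n) : Fin (n + 1) :=
  if h : (i : ℕ) + 1 < n then (π ⟨(i : ℕ) + 1, h⟩).castSucc else Fin.last n

theorem nxt_ne {n : ℕ} (π : Equiv.Perm (Fin n)) (i : Fin n) :
    ((π i : ℕ)) ≠ ((nxt π i : ℕ)) := by
  by_cases h : (i : ℕ) + 1 < n
  · simp only [nxt, dif_pos h, Fin.coe_castSucc]
    intro he
    have h2 : π i = π ⟨(i : ℕ) + 1, h⟩ := Fin.val_injective he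
    have h4 : (i : ℕ) = (i : ℕ) + 1 := congrArg Fin.val (π.injective h2)
    omega
  · simp only [nxt, dif_neg h, Fin.val_last]
    exact Nat.ne_of_lt (π i).isLt

/-- The path `P(π) = s, s', u_{π(1)}, v_{π(1)}, u_{π(2)}, v_{π(2)}, …, u_{π(n)},
v_{π(n)}, u_{n+1}, t` as a list of `2n+3` edges (for `n ≥ 1`). -/
def pathOf {n : ℕ} (π : Equiv.Perm (Fin n)) : List (Edg n) :=
  if h : 0 < n then
    Edg.start :: Edg.toU (π ⟨0, h⟩) ::
      ((List.ofFn fun i : Fin n =>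
          [Edg.crit (π i), Edg.back (π i) (nxt π i) (nxt_ne π i)]).flatten ++ [Edg.toT])
  else []

/-- The routing instance `I(π₁,…,π_n)`: the `n` packets with paths
`P(π₁),…,P(π_n)` through `G_n`. -/
def lowerBoundInstance (n : ℕ) (πs : Fin n → Equiv.Perm (Fin n)) : RInst where
  V := Vtx n
  E := Edg n
  src := Edg.src
  dst := Edg.dst
  k := n
  path i := pathOf (πs i)

/-!
In a feasible schedule of length `T = 3 n + 2 + s` no packet can wait for long on average: all
packets use the edge `(s, s')` and all use the edge `(u_{n+1}, t)`, so the starting times are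
distinct, the final crossing times are distinct, and the total waiting time is at most `n s`. Hence,
up to the permutations, such a schedule is described by a profile of starting and waiting times, and
if `s` is a small multiple of `n` there are only `exp (c n²)` profiles with a small constant `c`.

A profile determines when each packet crosses its `p`-th critical edge, for every `p`. Choose the
permutations one packet at a time. If at the crossing time of position `p` at least `m` earlier
packets cross critical edges, these edges are distinct, and all of them are forbidden for
`π i p`. As the `n²` crossings take place at fewer than `7 n / 2` times, most positions are crowded
in this sense. With `m = 2 q` and `q ≈ n / 10`, there are `2 q` packets with `q` crowded positions
each, and each such position costs a factor `(n - 2 q) / (n - q) ≤ 9 / 10`. So a profile is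
compatible with a proportion of at most `(9 / 10) ^ (2 q²)` of all tuples of permutations, and the
union bound over the profiles leaves a tuple compatible with none of them.
-/

open Finset Function
open scoped Nat

/-! ### Counting functions, permutations and bounded sums -/

theorem card_image_restrict_insert_le {ι : Type*} [DecidableEq ι] {α : ι → Type*}
    [∀ i, DecidableEq (α i)] {F : Finset (∀ i, α i)} {a : ι} {s : Finset ι} {k : ℕ}
    (h : ∀ f ∈ F, #({g ∈ F | ∀ j ∈ s, g j = f j}.image fun g ↦ g a) ≤ k) :
    #(F.image (insert a s).restrict) ≤ k * #(F.image s.restrict) := by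
  have himage : F.image s.restrict =
      (F.image (insert a s).restrict).image (restrict₂ (subset_insert a s)) := by
    rw [image_image]; rfl
  rw [himage]
  refine card_le_mul_card_image _ _ fun r hr ↦ ?_
  rw [← himage] at hr
  obtain ⟨f, hf, rfl⟩ := mem_image.1 hr
  refine le_trans (card_le_card_of_injOn (fun g ↦ g ⟨a, mem_insert_self a s⟩) ?_ ?_) (h f hf)
  · intro r hr
    obtain ⟨hrF, hrf⟩ := mem_filter.1 hr
    obtain ⟨g, hg, rfl⟩ := mem_image.1 hrF
    exact mem_image.2 ⟨g, mem_filter.2 ⟨hg, fun j hj ↦ congrFun hrf ⟨j, hj⟩⟩, rfl⟩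
  · intro g hg g' hg' heq
    have hs : restrict₂ (subset_insert a s) g = restrict₂ (subset_insert a s) g' :=
      (mem_filter.1 hg).2.trans (mem_filter.1 hg').2.symm
    funext ⟨j, hj⟩
    rcases mem_insert.1 hj with rfl | hjs
    · exact heq
    · exact congrFun hs ⟨j, hjs⟩

theorem card_le_prod_of_card_extensions_le {ι : Type*} [Fintype ι] [LinearOrder ι] {α : ι → Type*}
    [∀ i, DecidableEq (α i)] {F : Finset (∀ i, α i)} {b : ι → ℕ}
    (h : ∀ i, ∀ f ∈ F, #({g ∈ F | ∀ j < i, g j = f j}.image fun g ↦ g i) ≤ b i) :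
    #F ≤ ∏ i, b i := by
  suffices hs : ∀ s : Finset ι, IsLowerSet (s : Set ι) → #(F.image s.restrict) ≤ ∏ i ∈ s, b i by
    refine (card_image_of_injective F fun f g hfg ↦ ?_).ge.trans
      (hs univ (coe_univ (α := ι) ▸ isLowerSet_univ))
    exact funext fun i ↦ congrFun hfg ⟨i, mem_univ i⟩
  intro s
  induction s using Finset.induction_on_max with
  | empty => exact fun _ ↦ by simpa using card_le_one_of_subsingleton _
  | insert a s hmax ih =>
    intro hlower
    have hmem {j : ι} : j ∈ s ↔ j < a := ⟨hmax j, fun hj ↦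
      (mem_insert.1 (hlower hj.le (mem_insert_self a s))).resolve_left hj.ne⟩
    have hs : IsLowerSet (s : Set ι) := fun i j hji hi ↦ hmem.2 (hji.trans_lt (hmem.1 hi))
    rw [prod_insert fun ha ↦ (hmax a ha).false]
    refine (card_image_restrict_insert_le ?_).trans (Nat.mul_le_mul_left (b a) (ih hs))
    simpa only [hmem] using h a

section Perm

variable {α : Type*} [Fintype α] [DecidableEq α]

theorem card_perm_eqOn (B : Finset α) (π₀ : Equiv.Perm α) :
    #{π : Equiv.Perm α | ∀ a ∈ B, π a = π₀ a} = (Fintype.card α - #B)! := by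
  calc #{π : Equiv.Perm α | ∀ a ∈ B, π a = π₀ a}
      = #{π : Equiv.Perm α | ∀ a, ¬ a ∉ B → π a = a} :=
        card_equiv (Equiv.mulLeft π₀⁻¹) (by simp [Equiv.symm_apply_eq])
    _ = Fintype.card (Equiv.Perm {a // a ∉ B}) := by
        rw [← Fintype.card_subtype]
        exact Fintype.card_congr (Equiv.Perm.subtypeEquivSubtypePerm (· ∉ B)).symm
    _ = (Fintype.card α - #B)! := by
        rw [Fintype.card_perm, Fintype.card_subtype_compl, Fintype.card_coe]

theorem card_perm_forall_mem_le (B : Finset α) (Y : α → Finset α) :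
    #{π : Equiv.Perm α | ∀ a ∈ B, π a ∈ Y a} ≤ (∏ a ∈ B, #(Y a)) * (Fintype.card α - #B)! := by
  let restrictB (π : Equiv.Perm α) : B → α := fun a ↦ π a
  have himage : #(image restrictB {π | ∀ a ∈ B, π a ∈ Y a}) ≤ ∏ a ∈ B, #(Y a) := by
    calc _ ≤ #(Fintype.piFinset fun a : B ↦ Y a) := by
          refine card_le_card (image_subset_iff.2 fun π hπ ↦ ?_)
          exact Fintype.mem_piFinset.2 fun a ↦ (mem_filter.1 hπ).2 a a.2
      _ = ∏ a ∈ B, #(Y a) := by rw [Fintype.card_piFinset, prod_coe_sort B fun a ↦ #(Y a)]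
  rw [mul_comm]
  refine (card_le_mul_card_image (f := restrictB) _ _ fun r hr ↦ ?_).trans
    (Nat.mul_le_mul_left _ himage)
  obtain ⟨π₀, -, rfl⟩ := mem_image.1 hr
  rw [← card_perm_eqOn B π₀]
  refine card_le_card fun π hπ ↦ ?_
  exact mem_filter.2 ⟨mem_univ π, fun a ha ↦ congrFun (mem_filter.1 hπ).2 ⟨a, ha⟩⟩

end Perm

section FunctionsSumLE

variable {κ : Type*} [Fintype κ] [DecidableEq κ] {W : ℕ}

variable (κ W) in
/-- The functions `κ → ℕ` whose values add up to at most `W`. The box is implied by the bound on the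
sum; it is there to obtain a `Finset`. -/
def functionsSumLE : Finset (κ → ℕ) :=
  {w ∈ Fintype.piFinset fun _ ↦ range (W + 1) | ∑ x, w x ≤ W}

theorem mem_functionsSumLE {w : κ → ℕ} : w ∈ functionsSumLE κ W ↔ ∑ x, w x ≤ W := by
  refine mem_filter.trans (and_iff_right_of_imp fun hw ↦ Fintype.mem_piFinset.2 fun x ↦ ?_)
  exact mem_range_succ_iff.2 ((single_le_sum (fun _ _ ↦ Nat.zero_le _) (mem_univ x)).trans hw)

/-- The generating function `∑ w, x ^ ∑ a, w a = (1 - x)⁻¹ ^ |κ|` over all `w : κ → ℕ` assigns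
weight at least `x ^ W` to each function with sum at most `W`. -/
theorem card_functionsSumLE_mul_pow_le {x : ℝ} (hx₀ : 0 ≤ x) (hx₁ : x < 1) :
    #(functionsSumLE κ W) * x ^ W ≤ (1 - x)⁻¹ ^ Fintype.card κ := by
  calc #(functionsSumLE κ W) * x ^ W = ∑ _w ∈ functionsSumLE κ W, x ^ W := by
        rw [sum_const, nsmul_eq_mul]
    _ ≤ ∑ w ∈ functionsSumLE κ W, ∏ a, x ^ w a := sum_le_sum fun w hw ↦ by
        rw [prod_pow_eq_pow_sum]
        exact pow_le_pow_of_le_one hx₀ hx₁.le (mem_functionsSumLE.1 hw)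
    _ ≤ ∑ w ∈ Fintype.piFinset fun _ ↦ range (W + 1), ∏ a, x ^ w a :=
        sum_le_sum_of_subset_of_nonneg (filter_subset _ _) fun _ _ _ ↦ by positivity
    _ = ∏ _a : κ, ∑ j ∈ range (W + 1), x ^ j := by rw [prod_univ_sum]
    _ ≤ ∏ _a : κ, (1 - x)⁻¹ := prod_le_prod (fun _ _ ↦ by positivity) fun _ _ ↦ by
        rw [← tsum_geometric_of_lt_one hx₀ hx₁]
        exact (summable_geometric_of_lt_one hx₀ hx₁).sum_le_tsum _ fun _ _ ↦ by positivity
    _ = (1 - x)⁻¹ ^ Fintype.card κ := by rw [prod_const, card_univ]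

end FunctionsSumLE

theorem sum_sub_sum_le_of_injective {ι : Type*} [Fintype ι] {a b : ι → ℤ} {c d : ℤ}
    (ha : Injective a) (hb : Injective b) (hca : ∀ i, c ≤ a i) (hbd : ∀ i, b i < d) :
    ∑ i, b i - ∑ i, a i ≤ Fintype.card ι * (d - c - Fintype.card ι) := by
  have hlower := sum_range_le_sum (s := univ.map ⟨a, ha⟩) (c := c) (by simpa using hca)
  have hupper := sum_le_sum_range (s := univ.map ⟨b, hb⟩) (c := d - 1)
    (by simpa [Int.le_sub_one_iff] using hbd)
  simp only [sum_map, card_map, card_univ, Embedding.coeFn_mk] at hlower hupper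
  have hdiff (k : ℕ) : ∑ j ∈ range k, (d - 1 - (j : ℤ)) - ∑ j ∈ range k, (c + (j : ℤ)) =
      k * (d - c - k) := by
    induction k with
    | zero => simp
    | succ k ih => rw [sum_range_succ, sum_range_succ]; push_cast; linarith
  linarith [hdiff (Fintype.card ι)]

theorem exists_forall_notMem_of_card_mul_lt_one {α β : Type*} [Fintype β] [Nonempty β]
    {S : Finset α} {F : α → Finset β} {c : ℝ} (hF : ∀ a ∈ S, (#(F a) : ℝ) ≤ Fintype.card β * c)
    (hc : #S * c < 1) : ∃ b, ∀ a ∈ S, b ∉ F a := by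
  classical
  by_contra! hcover
  have huniv : (univ : Finset β) ⊆ S.biUnion F := fun b _ ↦ mem_biUnion.2 (hcover b)
  have hβ : (0 : ℝ) < Fintype.card β := by exact_mod_cast Fintype.card_pos
  have : (Fintype.card β : ℝ) < Fintype.card β :=
    calc (Fintype.card β : ℝ) ≤ ∑ a ∈ S, (#(F a) : ℝ) := by
          exact_mod_cast (card_le_card huniv).trans card_biUnion_le
      _ ≤ ∑ _a ∈ S, Fintype.card β * c := sum_le_sum hF
      _ = Fintype.card β * (#S * c) := by rw [sum_const, nsmul_eq_mul]; ring
      _ < Fintype.card β := mul_lt_of_lt_one_right hβ hc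
  exact this.false

theorem pow_mul_factorial_le_pow_mul_factorial {N k : ℕ} (hk : k ≤ N) {y c : ℝ} (hy : 0 ≤ y)
    (hc : 0 ≤ c) (hyc : y ≤ c * (N - k : ℕ)) : y ^ k * (N - k)! ≤ c ^ k * N ! := by
  calc y ^ k * (N - k)! ≤ (c * (N - k : ℕ)) ^ k * (N - k)! := by gcongr
    _ = c ^ k * ((N - k)! * (N - k) ^ k : ℕ) := by push_cast; ring
    _ ≤ c ^ k * N ! := by
        have := Nat.factorial_mul_pow_sub_le_factorial (Nat.sub_le N k)
        rw [Nat.sub_sub_self hk] at this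
        gcongr

/-! ### Conflict-free tuples of permutations -/

section ConflictFree

variable {ι α θ : Type*} [Fintype ι] [LinearOrder ι] [Fintype α] [DecidableEq θ]
  {τ : ι → α → θ} {i i' : ι} {p p' : α} {m k : ℕ}

/-- The packets `j < i` that cross some critical edge at the time `τ i p`; here `<` is the order in
which the permutations are revealed. -/
def rivals (τ : ι → α → θ) (i : ι) (p : α) : Finset ι :=
  {j | j < i ∧ ∃ q, τ j q = τ i p}

theorem mem_rivals {j : ι} : j ∈ rivals τ i p ↔ j < i ∧ ∃ q, τ j q = τ i p := by
  simp [rivals]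

/-- The positions at which packet `i` has at least `m` rivals. -/
def crowded (τ : ι → α → θ) (m : ℕ) (i : ι) : Finset α :=
  {p | m ≤ #(rivals τ i p)}

theorem mem_crowded : p ∈ crowded τ m i ↔ m ≤ #(rivals τ i p) := by
  simp [crowded]

theorem card_rivals_lt_card_rivals (hi : i < i') (hτ : τ i p = τ i' p') :
    #(rivals τ i p) < #(rivals τ i' p') := by
  refine card_lt_card ((ssubset_iff_of_subset fun j hj ↦ ?_).2
    ⟨i, mem_rivals.2 ⟨hi, p, hτ⟩, fun hmem ↦ (mem_rivals.1 hmem).1.false⟩)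
  obtain ⟨hji, q, hq⟩ := mem_rivals.1 hj
  exact mem_rivals.2 ⟨hji.trans hi, q, hq.trans hτ⟩

/-- Among the packets that cross critical edges at a given time, the number of rivals determines the
packet, so fewer than `m` rivals occur for at most `m` of them. -/
theorem card_rivals_lt_le (hinj : ∀ i, Injective (τ i)) {S : Finset θ} (hS : ∀ i p, τ i p ∈ S)
    (m : ℕ) : #{x : ι × α | #(rivals τ x.1 x.2) < m} ≤ #S * m := by
  rw [← card_range m, ← card_product]
  refine card_le_card_of_injOn (fun x ↦ (τ x.1 x.2, #(rivals τ x.1 x.2))) ?_ ?_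
  · intro x hx
    exact mem_product.2 ⟨hS _ _, by simpa using hx⟩
  · rintro ⟨i, p⟩ - ⟨i', p'⟩ - heq
    obtain ⟨hτ : τ i p = τ i' p', hcard : #(rivals τ i p) = #(rivals τ i' p')⟩ := Prod.mk.inj heq
    rcases lt_trichotomy i i' with hlt | rfl | hlt
    · exact absurd hcard (card_rivals_lt_card_rivals hlt hτ).ne
    · rw [hinj i hτ]
    · exact absurd hcard (card_rivals_lt_card_rivals hlt hτ.symm).ne'

theorem card_mul_card_le_crowded (hinj : ∀ i, Injective (τ i)) {S : Finset θ}
    (hS : ∀ i p, τ i p ∈ S) (m k : ℕ) :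
    Fintype.card ι * Fintype.card α ≤
      #{i | k ≤ #(crowded τ m i)} * Fintype.card α + Fintype.card ι * k + #S * m := by
  have hcrowded : #{x : ι × α | m ≤ #(rivals τ x.1 x.2)} ≤
      #{i | k ≤ #(crowded τ m i)} * Fintype.card α + Fintype.card ι * k := by
    calc #{x : ι × α | m ≤ #(rivals τ x.1 x.2)} = ∑ i, #(crowded τ m i) := by
          simp only [crowded, card_filter, Fintype.sum_prod_type]
      _ ≤ ∑ i, ((if k ≤ #(crowded τ m i) then Fintype.card α else 0) + k) := by
          refine sum_le_sum fun i _ ↦ ?_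
          have := card_le_univ (crowded τ m i)
          split_ifs <;> omega
      _ = #{i | k ≤ #(crowded τ m i)} * Fintype.card α + Fintype.card ι * k := by
          rw [sum_add_distrib, ← sum_filter, sum_const, sum_const, card_univ, smul_eq_mul,
            smul_eq_mul]
  calc Fintype.card ι * Fintype.card α
      = #{x : ι × α | m ≤ #(rivals τ x.1 x.2)} + #{x : ι × α | #(rivals τ x.1 x.2) < m} := by
        rw [← Fintype.card_prod, ← card_univ,
          ← card_filter_add_card_filter_not fun x : ι × α ↦ m ≤ #(rivals τ x.1 x.2)]
        simp only [not_le]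
    _ ≤ _ := Nat.add_le_add hcrowded (card_rivals_lt_le hinj hS m)

variable [DecidableEq α] {π ρ : ι → Equiv.Perm α}

/-- The tuples of permutations compatible with prescribed crossing times: `τ i p` is the time at
which packet `i` crosses the critical edge `π i p`, and no two packets cross the same critical edge
at the same time. -/
def conflictFree (τ : ι → α → θ) : Finset (ι → Equiv.Perm α) :=
  {π | ∀ i j p q, τ i p = τ j q → π i p = π j q → i = j}

theorem mem_conflictFree :
    π ∈ conflictFree τ ↔ ∀ i j p q, τ i p = τ j q → π i p = π j q → i = j := by
  simp [conflictFree]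

/-- The critical edges that the rivals of `i` at `p` cross at the time `τ i p`. -/
def occupied (τ : ι → α → θ) (π : ι → Equiv.Perm α) (i : ι) (p : α) : Finset α :=
  {e | ∃ j < i, ∃ q, τ j q = τ i p ∧ π j q = e}

theorem mem_occupied {e : α} :
    e ∈ occupied τ π i p ↔ ∃ j < i, ∃ q, τ j q = τ i p ∧ π j q = e := by
  simp [occupied]

theorem card_rivals_le_card_occupied (hπ : π ∈ conflictFree τ) (i : ι) (p : α) :
    #(rivals τ i p) ≤ #(occupied τ π i p) := by
  refine card_le_card_of_forall_subsingleton (fun j e ↦ ∃ q, τ j q = τ i p ∧ π j q = e) ?_ ?_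
  · intro j hj
    obtain ⟨hji, q, hq⟩ := mem_rivals.1 hj
    exact ⟨π j q, mem_occupied.2 ⟨j, hji, q, hq, rfl⟩, q, hq, rfl⟩
  · rintro e - j ⟨-, q, hq, rfl⟩ j' ⟨-, q', hq', he⟩
    exact mem_conflictFree.1 hπ j j' q q' (hq.trans hq'.symm) he.symm

theorem apply_notMem_occupied (hρ : ρ ∈ conflictFree τ) (hagree : ∀ j < i, ρ j = π j) :
    ρ i p ∉ occupied τ π i p := by
  intro hocc
  obtain ⟨j, hji, q, hq, he⟩ := mem_occupied.1 hocc
  exact hji.ne (mem_conflictFree.1 hρ j i q p hq (by rw [hagree j hji, he]))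

theorem card_extensions_le (hk : k ≤ #(crowded τ m i)) (hπ : π ∈ conflictFree τ) :
    #({ρ ∈ conflictFree τ | ∀ j < i, ρ j = π j}.image fun ρ ↦ ρ i) ≤
      (Fintype.card α - m) ^ k * (Fintype.card α - k)! := by
  obtain ⟨B, hB, rfl⟩ := exists_subset_card_eq hk
  calc #({ρ ∈ conflictFree τ | ∀ j < i, ρ j = π j}.image fun ρ ↦ ρ i)
      ≤ #{ϕ : Equiv.Perm α | ∀ p ∈ B, ϕ p ∈ (occupied τ π i p)ᶜ} := by
        refine card_le_card (image_subset_iff.2 fun ρ hρ ↦ ?_)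
        obtain ⟨hρ, hagree⟩ := mem_filter.1 hρ
        exact mem_filter.2 ⟨mem_univ _, fun p _ ↦ mem_compl.2 (apply_notMem_occupied hρ hagree)⟩
    _ ≤ (∏ p ∈ B, #(occupied τ π i p)ᶜ) * (Fintype.card α - #B)! := card_perm_forall_mem_le B _
    _ ≤ (Fintype.card α - m) ^ #B * (Fintype.card α - #B)! := by
        refine Nat.mul_le_mul_right _ (prod_le_pow_card _ _ _ fun p hp ↦ ?_)
        rw [card_compl]
        exact Nat.sub_le_sub_left
          ((mem_crowded.1 (hB hp)).trans (card_rivals_le_card_occupied hπ i p)) _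

theorem card_conflictFree_le (hk : k ≤ Fintype.card α) {c : ℝ} (hc₀ : 0 ≤ c) (hc₁ : c ≤ 1)
    (hc : ((Fintype.card α - m : ℕ) : ℝ) ≤ c * (Fintype.card α - k : ℕ))
    {r : ℕ} (hr : r ≤ #{i | k ≤ #(crowded τ m i)}) :
    (#(conflictFree τ) : ℝ) ≤ Fintype.card (ι → Equiv.Perm α) * (c ^ k) ^ r := by
  set N := Fintype.card α
  have hseq : #(conflictFree τ) ≤
      ∏ i, if k ≤ #(crowded τ m i) then (N - m) ^ k * (N - k)! else N ! := by
    refine card_le_prod_of_card_extensions_le fun i π hπ ↦ ?_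
    split_ifs with hi
    · exact card_extensions_le hi hπ
    · exact (card_le_univ _).trans Fintype.card_perm.le
  calc (#(conflictFree τ) : ℝ)
      ≤ ∏ i, ((if k ≤ #(crowded τ m i) then (N - m) ^ k * (N - k)! else N ! : ℕ) : ℝ) := by
        exact_mod_cast hseq
    _ ≤ ∏ i : ι, (N ! * if k ≤ #(crowded τ m i) then c ^ k else 1) := by
        refine prod_le_prod (fun i _ ↦ by positivity) fun i _ ↦ ?_
        split_ifs
        · push_cast
          rw [mul_comm (N ! : ℝ)]
          exact pow_mul_factorial_le_pow_mul_factorial hk (by positivity) hc₀ hc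
        · rw [mul_one]
    _ = Fintype.card (ι → Equiv.Perm α) * (c ^ k) ^ #{i | k ≤ #(crowded τ m i)} := by
        rw [prod_mul_distrib, ← prod_filter, prod_const, prod_const, Fintype.card_fun,
          Fintype.card_perm, card_univ, Nat.cast_pow]
    _ ≤ Fintype.card (ι → Equiv.Perm α) * (c ^ k) ^ r := by
        gcongr _ * ?_
        exact pow_le_pow_of_le_one (by positivity) (pow_le_one₀ hc₀ hc₁) hr

end ConflictFree

/-! ### Waiting times -/

section Profiles

variable {ι : Type*} {n : ℕ}

/-- The time at which packet `i` crosses its `p`-th critical edge, if it crosses the first one at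
time `a i` and waits `w (i, q)` steps between its `q`-th critical edge and the following one. The
summand `2` accounts for the two edges crossed in between. -/
def critTime (a : ι → ℕ) (w : ι × Fin n → ℕ) (i : ι) (p : Fin n) : ℕ :=
  a i + ∑ q ∈ Iio p, (w (i, q) + 2)

theorem critTime_strictMono (a : ι → ℕ) (w : ι × Fin n → ℕ) (i : ι) :
    StrictMono (critTime a w i) := fun _ _ hp ↦
  Nat.add_lt_add_left (sum_lt_sum_of_subset (Iio_subset_Iio hp.le) (mem_Iio.2 hp) notMem_Iio_self
    (Nat.add_pos_right _ two_pos) fun _ _ _ ↦ Nat.zero_le _) _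

theorem add_sum_range_gap {g : ℕ → ℕ} (hg : ∀ q < n, g q + 2 ≤ g (q + 1)) {p : ℕ} (hp : p ≤ n) :
    g 0 + ∑ q ∈ range p, (g (q + 1) - (g q + 2) + 2) = g p := by
  induction p with
  | zero => simp
  | succ p ih =>
    rw [sum_range_succ, ← add_assoc, ih (by omega)]
    have := hg p hp
    omega

variable [Fintype ι] [DecidableEq ι] {T W : ℕ}

variable (ι n T W) in
/-- The pairs `(a, w)` of starting times and waiting times with total waiting time at most `W` for
which all critical edges are crossed before time `T`. -/
def profiles : Finset ((ι → ℕ) × (ι × Fin n → ℕ)) :=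
  {d ∈ (Fintype.piFinset fun _ ↦ range T) ×ˢ functionsSumLE (ι × Fin n) W |
    ∀ i p, critTime d.1 d.2 i p < T}

theorem mem_profiles {d : (ι → ℕ) × (ι × Fin n → ℕ)} : d ∈ profiles ι n T W ↔
    (∀ i, d.1 i < T) ∧ ∑ x, d.2 x ≤ W ∧ ∀ i p, critTime d.1 d.2 i p < T := by
  simp [profiles, mem_functionsSumLE, and_assoc]

theorem card_profiles_mul_pow_le {x : ℝ} (hx₀ : 0 ≤ x) (hx₁ : x < 1) :
    #(profiles ι n T W) * x ^ W ≤
      (T : ℝ) ^ Fintype.card ι * (1 - x)⁻¹ ^ (Fintype.card ι * n) := by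
  have hcard : #(profiles ι n T W) ≤ T ^ Fintype.card ι * #(functionsSumLE (ι × Fin n) W) := by
    refine (card_filter_le _ _).trans_eq ?_
    rw [card_product, Fintype.card_piFinset, prod_const, card_univ, card_range]
  calc #(profiles ι n T W) * x ^ W
      ≤ (T ^ Fintype.card ι * #(functionsSumLE (ι × Fin n) W) : ℕ) * x ^ W := by gcongr
    _ = (T : ℝ) ^ Fintype.card ι * (#(functionsSumLE (ι × Fin n) W) * x ^ W) := by
        push_cast; ring
    _ ≤ (T : ℝ) ^ Fintype.card ι * (1 - x)⁻¹ ^ Fintype.card (ι × Fin n) := by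
        gcongr
        exact card_functionsSumLE_mul_pow_le hx₀ hx₁
    _ = (T : ℝ) ^ Fintype.card ι * (1 - x)⁻¹ ^ (Fintype.card ι * n) := by
        rw [Fintype.card_prod, Fintype.card_fin]

theorem exists_mem_profiles_critTime_eq {g : ι → ℕ → ℕ}
    (hg : ∀ i, ∀ q < n, g i q + 2 ≤ g i (q + 1)) (hT : ∀ i, g i n < T)
    (hW : ∑ i, g i n ≤ ∑ i, g i 0 + Fintype.card ι * (2 * n) + W) :
    ∃ d ∈ profiles ι n T W, critTime d.1 d.2 = fun i (p : Fin n) ↦ g i p := by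
  let w : ι × Fin n → ℕ := fun x ↦ g x.1 (x.2 + 1) - (g x.1 x.2 + 2)
  have hcrit : critTime (fun i ↦ g i 0) w = fun i (p : Fin n) ↦ g i p := by
    funext i p
    rw [← add_sum_range_gap (hg i) p.2.le, critTime, ← Nat.Iio_eq_range,
      ← Fin.map_valEmbedding_Iio, sum_map]
    rfl
  have hmono (i : ι) {p : ℕ} (hp : p ≤ n) : g i p ≤ g i n := by
    rw [← add_sum_range_gap (hg i) hp, ← add_sum_range_gap (hg i) le_rfl]
    gcongr
  have htotal : ∑ x, w x ≤ W := by
    have hrow (i : ι) : g i 0 + (∑ q, w (i, q) + 2 * n) = g i n := by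
      rw [← add_sum_range_gap (hg i) le_rfl, sum_add_distrib, sum_const, card_range, smul_eq_mul,
        Fin.sum_univ_eq_sum_range fun q ↦ g i (q + 1) - (g i q + 2)]
      ring
    have hsum := sum_congr rfl fun i (_ : i ∈ univ) ↦ hrow i
    rw [sum_add_distrib, sum_add_distrib, sum_const, card_univ, smul_eq_mul] at hsum
    rw [Fintype.sum_prod_type]
    omega
  refine ⟨(fun i ↦ g i 0, w), mem_profiles.2 ⟨fun i ↦ ?_, htotal, fun i p ↦ ?_⟩, hcrit⟩
  · exact (hmono i n.zero_le).trans_lt (hT i)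
  · rw [hcrit]
    exact (hmono i p.2.le).trans_lt (hT i)

end Profiles

/-! ### Crossing times -/

namespace RInst

variable {I : RInst} {σ : Fin I.k → ℕ → ℕ} {T : ℕ} {i j : Fin I.k} {x y : ℕ} {e : I.E}

/-- For a packet with `f t` edges behind it at time `t`, the time at which it starts to cross the
edge with index `x` of its path; it crosses that edge in step `crossTime f x + 1`. Junk value `0` if
it never does. -/
noncomputable def crossTime (f : ℕ → ℕ) (x : ℕ) : ℕ :=
  sInf {t | x < f (t + 1)}

theorem IsSchedule.monotone (hσ : I.IsSchedule σ) (i : Fin I.k) : Monotone (σ i) :=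
  monotone_nat_of_le_succ fun t ↦ by have := hσ.2.1 i t; omega

theorem CompletedBy.mono (hT : I.CompletedBy σ T) (hσ : I.IsSchedule σ) {T' : ℕ} (h : T ≤ T') :
    I.CompletedBy σ T' := fun i ↦
  (hσ.2.2 i T').antisymm ((hT i).ge.trans (hσ.monotone i h))

section CrossTime

variable (hσ : I.IsSchedule σ) (hT : I.CompletedBy σ T)
include hσ hT

theorem lt_apply_crossTime_add_one (hx : x < (I.path i).length) :
    x < σ i (crossTime (σ i) x + 1) := by
  refine Nat.sInf_mem (s := {t | x < σ i (t + 1)}) ⟨T, ?_⟩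
  exact hx.trans_le ((hT i).ge.trans (hσ.monotone i T.le_succ))

theorem apply_crossTime (hx : x < (I.path i).length) : σ i (crossTime (σ i) x) = x := by
  have hlt := lt_apply_crossTime_add_one hσ hT hx
  have hle : σ i (crossTime (σ i) x) ≤ x := by
    rcases h : crossTime (σ i) x with _ | t
    · exact (hσ.1 i).trans_le x.zero_le
    · exact not_lt.1 (Nat.notMem_of_lt_sInf (s := {t | x < σ i (t + 1)})
        (t.lt_succ_self.trans_eq h.symm))
  have := hσ.2.1 i (crossTime (σ i) x)
  omega

theorem crossTime_lt (hx : x < (I.path i).length) : crossTime (σ i) x < T :=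
  (hσ.monotone i).reflect_lt (by rwa [apply_crossTime hσ hT hx, hT i])

theorem crossTime_lt_crossTime (hxy : x < y) (hy : y < (I.path i).length) :
    crossTime (σ i) x < crossTime (σ i) y :=
  (hσ.monotone i).reflect_lt
    (by rwa [apply_crossTime hσ hT (hxy.trans hy), apply_crossTime hσ hT hy])

theorem crosses_crossTime (he : (I.path i)[x]? = some e) :
    I.Crosses σ i e (crossTime (σ i) x) := by
  have hx := (List.getElem?_eq_some_iff.1 he).1
  have hlt := lt_apply_crossTime_add_one hσ hT hx
  rw [Crosses, apply_crossTime hσ hT hx]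
  refine ⟨?_, he⟩
  have := apply_crossTime hσ hT hx
  have := hσ.2.1 i (crossTime (σ i) x)
  omega

theorem eq_of_crossTime_eq (hload : I.LoadLE σ 1) (hi : (I.path i)[x]? = some e)
    (hj : (I.path j)[y]? = some e) (h : crossTime (σ i) x = crossTime (σ j) y) : i = j := by
  have hsub := Finite.card_le_one_iff_subsingleton.1 (hload e (crossTime (σ i) x))
  exact congrArg Subtype.val (hsub.elim ⟨i, crosses_crossTime hσ hT hi⟩
    ⟨j, h ▸ crosses_crossTime hσ hT hj⟩)

end CrossTime

/-! ### Schedules on the lower-bound instance -/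

theorem congestion_eq_of_forall_mem (h : ∀ i, e ∈ I.path i) : I.congestion = I.k := by
  refine le_antisymm (Finset.sup_le fun e _ ↦ ?_) ?_
  · exact (Finite.card_subtype_le _).trans_eq (Nat.card_fin I.k)
  · calc I.k = Nat.card {i | e ∈ I.path i} := by simp [h]
      _ ≤ I.congestion := le_sup (f := fun e ↦ Nat.card {i | e ∈ I.path i}) (mem_univ e)

theorem dilation_eq_of_forall_length {L : ℕ} (i : Fin I.k) (h : ∀ j, (I.path j).length = L) :
    I.dilation = L :=
  le_antisymm (Finset.sup_le fun j _ ↦ (h j).le)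
    ((h i).ge.trans (le_sup (f := fun j ↦ (I.path j).length) (mem_univ i)))

end RInst

theorem getElem?_flatten_ofFn_pair {α : Type*} {n : ℕ} (f g : Fin n → α) (p : Fin n) :
    (List.ofFn fun i ↦ [f i, g i]).flatten[2 * (p : ℕ)]? = some (f p) := by
  induction n with
  | zero => exact p.elim0
  | succ n ih =>
    rw [List.ofFn_succ, List.flatten_cons]
    refine Fin.cases rfl (fun q ↦ ?_) p
    rw [Fin.val_succ, mul_add_one]
    exact ih (fun i ↦ f i.succ) (fun i ↦ g i.succ) q

theorem length_flatten_ofFn_pair {α : Type*} {n : ℕ} (f g : Fin n → α) :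
    (List.ofFn fun i ↦ [f i, g i]).flatten.length = 2 * n := by
  simp [List.length_flatten, List.map_ofFn, comp_def, mul_comm]

section PathOf

variable {n : ℕ} (π : Equiv.Perm (Fin n))

theorem length_pathOf (hn : 0 < n) : (pathOf π).length = 2 * n + 3 := by
  rw [pathOf, dif_pos hn, List.length_cons, List.length_cons, List.length_append,
    length_flatten_ofFn_pair, List.length_singleton]

theorem getElem?_pathOf_zero (hn : 0 < n) : (pathOf π)[0]? = some Edg.start := by
  rw [pathOf, dif_pos hn, List.getElem?_cons_zero]

theorem getElem?_pathOf_crit (p : Fin n) :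
    (pathOf π)[2 * (p : ℕ) + 2]? = some (Edg.crit (π p)) := by
  have h := getElem?_flatten_ofFn_pair (fun i ↦ Edg.crit (π i))
    (fun i ↦ Edg.back (π i) (nxt π i) (nxt_ne π i)) p
  rw [pathOf, dif_pos p.pos, List.getElem?_cons_succ, List.getElem?_cons_succ,
    List.getElem?_append_left (List.getElem?_eq_some_iff.1 h).1, h]

theorem getElem?_pathOf_toT (hn : 0 < n) : (pathOf π)[2 * n + 2]? = some Edg.toT := by
  rw [pathOf, dif_pos hn, List.getElem?_cons_succ, List.getElem?_cons_succ,
    ← length_flatten_ofFn_pair (fun i ↦ Edg.crit (π i))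
      (fun i ↦ Edg.back (π i) (nxt π i) (nxt_ne π i)), List.getElem?_concat_length]

end PathOf

section LowerBoundInstance

variable {n : ℕ} {πs : Fin n → Equiv.Perm (Fin n)}

theorem congestion_lowerBoundInstance (hn : 0 < n) : (lowerBoundInstance n πs).congestion = n :=
  RInst.congestion_eq_of_forall_mem (I := lowerBoundInstance n πs) (e := Edg.start)
    fun i ↦ List.mem_of_getElem? (getElem?_pathOf_zero (πs i) hn)

theorem dilation_lowerBoundInstance (hn : 0 < n) :
    (lowerBoundInstance n πs).dilation = 2 * n + 3 :=
  RInst.dilation_eq_of_forall_length (I := lowerBoundInstance n πs) ⟨0, hn⟩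
    fun i ↦ length_pathOf (πs i) hn

variable {σ : Fin (lowerBoundInstance n πs).k → ℕ → ℕ} {T s : ℕ}

open RInst

theorem sum_crossTime_last_le (hn : 0 < n) (hσ : (lowerBoundInstance n πs).IsSchedule σ)
    (hload : (lowerBoundInstance n πs).LoadLE σ 1)
    (hT : (lowerBoundInstance n πs).CompletedBy σ (3 * n + 2 + s)) :
    ∑ i : Fin n, crossTime (σ i) (2 * n + 2) ≤
      ∑ i : Fin n, crossTime (σ i) 0 + n * (2 * n + 2 + s) := by
  have hlength (i : Fin n) : ((lowerBoundInstance n πs).path i).length = 2 * n + 3 :=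
    length_pathOf (πs i) hn
  have hfirst : Injective fun i : Fin n ↦ (crossTime (σ i) 0 : ℤ) := fun i j h ↦
    eq_of_crossTime_eq hσ hT hload (getElem?_pathOf_zero (πs i) hn)
      (getElem?_pathOf_zero (πs j) hn) (Nat.cast_injective h)
  have hlast : Injective fun i : Fin n ↦ (crossTime (σ i) (2 * n + 2) : ℤ) := fun i j h ↦
    eq_of_crossTime_eq hσ hT hload (getElem?_pathOf_toT (πs i) hn)
      (getElem?_pathOf_toT (πs j) hn) (Nat.cast_injective h)
  have hsum := sum_sub_sum_le_of_injective (c := 0) (d := (3 * n + 2 + s : ℕ)) hfirst hlast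
    (fun i ↦ Nat.cast_nonneg _)
    (fun i ↦ Nat.cast_lt.2 (crossTime_lt hσ hT (by rw [hlength]; omega)))
  rw [Fintype.card_fin] at hsum
  zify
  push_cast at hsum
  linarith

theorem exists_profile_mem_conflictFree (hn : 0 < n) (hσ : (lowerBoundInstance n πs).IsSchedule σ)
    (hload : (lowerBoundInstance n πs).LoadLE σ 1)
    (hT : (lowerBoundInstance n πs).CompletedBy σ (3 * n + 2 + s)) :
    ∃ d ∈ profiles (Fin n) n (3 * n + 2 + s) (n * s), πs ∈ conflictFree (critTime d.1 d.2) := by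
  have hlength (i : Fin n) : ((lowerBoundInstance n πs).path i).length = 2 * n + 3 :=
    length_pathOf (πs i) hn
  have hlt (i : Fin n) {x y : ℕ} (hxy : x < y) (hy : y < 2 * n + 3) :
      crossTime (σ i) x < crossTime (σ i) y :=
    crossTime_lt_crossTime hσ hT hxy (hy.trans_eq (hlength i).symm)
  have htwo (i : Fin n) {x : ℕ} (hx : x + 2 < 2 * n + 3) :
      crossTime (σ i) x + 2 ≤ crossTime (σ i) (x + 2) := by
    have hxx : crossTime (σ i) x < crossTime (σ i) (x + 1) := hlt i (by omega) (by omega)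
    have hxy : crossTime (σ i) (x + 1) < crossTime (σ i) (x + 2) := hlt i (by omega) hx
    omega
  have hwait : ∑ i : Fin n, crossTime (σ i) (2 * n + 2) ≤
      ∑ i : Fin n, crossTime (σ i) (2 * 0 + 2) + Fintype.card (Fin n) * (2 * n) + n * s := by
    calc ∑ i : Fin n, crossTime (σ i) (2 * n + 2)
        ≤ ∑ i : Fin n, crossTime (σ i) 0 + n * (2 * n + 2 + s) :=
          sum_crossTime_last_le hn hσ hload hT
      _ = ∑ i : Fin n, (crossTime (σ i) 0 + 2) + Fintype.card (Fin n) * (2 * n) + n * s := by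
          rw [sum_add_distrib, sum_const, card_univ, Fintype.card_fin, smul_eq_mul]; ring
      _ ≤ _ := by gcongr with i; exact htwo i (by omega)
  obtain ⟨d, hd, hcrit⟩ := exists_mem_profiles_critTime_eq (T := 3 * n + 2 + s)
    (g := fun i : Fin n ↦ fun q ↦ crossTime (σ i) (2 * q + 2))
    (fun i q hq ↦ htwo i (by omega)) (fun i ↦ crossTime_lt hσ hT (by rw [hlength]; omega)) hwait
  refine ⟨d, hd, mem_conflictFree.2 fun i j p q hτ hπ ↦ ?_⟩
  rw [hcrit] at hτ
  exact eq_of_crossTime_eq hσ hT hload (getElem?_pathOf_crit (πs i) p)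
    (hπ ▸ getElem?_pathOf_crit (πs j) q) hτ

end LowerBoundInstance

/-! ### The union bound -/

section Numerics

variable {n q s T W : ℕ}

theorem forty_mul_le_exp {x : ℝ} (hx : 100000 ≤ x) : 40 * x ≤ Real.exp (x / 100) := by
  calc 40 * x ≤ (x / 100) ^ 3 / (3 ! : ℕ) := by
        rw [show (3 ! : ℕ) = 6 from rfl]
        push_cast
        nlinarith [mul_le_mul hx hx (by norm_num) (by linarith)]
    _ ≤ Real.exp (x / 100) := Real.pow_div_factorial_le_exp _ (by linarith) 3

theorem card_profiles_le_pow_mul_exp :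
    (#(profiles (Fin n) n T W) : ℝ) ≤ T ^ n * Real.exp (9 * W + n * n / 4095) := by
  have hx : (4096 : ℝ) ≤ Real.exp 9 := by
    calc (4096 : ℝ) ≤ 2.7 ^ 9 := by norm_num
      _ ≤ Real.exp 1 ^ 9 := by gcongr; linarith [Real.exp_one_gt_d9]
      _ = Real.exp 9 := by rw [← Real.exp_nat_mul]; norm_num
  have hinv : (1 - 1 / 4096 : ℝ)⁻¹ ≤ Real.exp (1 / 4095) := by
    calc (1 - 1 / 4096 : ℝ)⁻¹ = 1 / 4095 + 1 := by norm_num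
      _ ≤ Real.exp (1 / 4095) := Real.add_one_le_exp _
  calc (#(profiles (Fin n) n T W) : ℝ)
      = #(profiles (Fin n) n T W) * (1 / 4096) ^ W * 4096 ^ W := by
        rw [mul_assoc, ← mul_pow]; norm_num
    _ ≤ T ^ n * (1 - 1 / 4096)⁻¹ ^ (n * n) * 4096 ^ W := by
        gcongr ?_ * 4096 ^ W
        simpa only [Fintype.card_fin] using card_profiles_mul_pow_le (ι := Fin n)
          (x := 1 / 4096) (by norm_num) (by norm_num)
    _ ≤ T ^ n * Real.exp (1 / 4095) ^ (n * n) * Real.exp 9 ^ W := by gcongr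
    _ = T ^ n * Real.exp (9 * W + n * n / 4095) := by
        rw [mul_assoc, ← Real.exp_nat_mul, ← Real.exp_nat_mul, ← Real.exp_add]
        push_cast
        ring_nf

theorem card_profiles_mul_pow_lt_one (hq : 100000 ≤ q) (hn : n ≤ 11 * q) (hs : 2500 * s ≤ q)
    (hT : T ≤ 40 * q) :
    #(profiles (Fin n) n T (n * s)) * ((9 / 10 : ℝ) ^ q) ^ (2 * q) < 1 := by
  have hTexp : (T : ℝ) ≤ Real.exp (q / 100) :=
    (by exact_mod_cast hT : (T : ℝ) ≤ 40 * q).trans (forty_mul_le_exp (by exact_mod_cast hq))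
  have hexp : (9 / 10 : ℝ) ≤ Real.exp (-(1 / 10)) := by
    linarith [Real.one_sub_le_exp_neg (1 / 10)]
  have hexponent : (n * (q / 100) + (9 * (n * s) + n * n / 4095) - q * q / 5 : ℝ) < 0 := by
    have hq' : (0 : ℝ) < q := by exact_mod_cast (by omega : 0 < q)
    have hn' : (n : ℝ) ≤ 11 * q := by exact_mod_cast hn
    have hs' : (2500 * s : ℝ) ≤ q := by exact_mod_cast hs
    calc (n * (q / 100) + (9 * (n * s) + n * n / 4095) - q * q / 5 : ℝ)
        = n * (q / 100 + 9 * s + n / 4095) - q * q / 5 := by ring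
      _ ≤ 11 * q * (q / 100 + 9 * (q / 2500) + 11 * q / 4095) - q * q / 5 := by
          gcongr
          linarith
      _ < 0 := by nlinarith [mul_pos hq' hq']
  calc #(profiles (Fin n) n T (n * s)) * ((9 / 10 : ℝ) ^ q) ^ (2 * q)
      ≤ T ^ n * Real.exp (9 * (n * s : ℕ) + n * n / 4095) * ((9 / 10) ^ q) ^ (2 * q) := by
        gcongr
        exact card_profiles_le_pow_mul_exp
    _ ≤ Real.exp (q / 100) ^ n * Real.exp (9 * (n * s : ℕ) + n * n / 4095) *
          (Real.exp (-(1 / 10)) ^ q) ^ (2 * q) := by gcongr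
    _ = Real.exp (n * (q / 100) + (9 * (n * s) + n * n / 4095) - q * q / 5) := by
        rw [← Real.exp_nat_mul, ← Real.exp_nat_mul, ← Real.exp_nat_mul, ← Real.exp_add,
          ← Real.exp_add]
        push_cast
        ring_nf
    _ < 1 := Real.exp_lt_one_iff.2 hexponent

theorem two_mul_le_card_crowded {τ : Fin n → Fin n → ℕ} (hinj : ∀ i, Injective (τ i))
    (hτ : ∀ i p, τ i p < T) (hqn : 10 * q ≤ n) (hT : 2 * T ≤ 7 * n) :
    2 * q ≤ #{i | q ≤ #(crowded τ (2 * q) i)} := by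
  have hcount := card_mul_card_le_crowded hinj (fun i p ↦ mem_range.2 (hτ i p)) (2 * q) q
  rw [Fintype.card_fin, card_range] at hcount
  by_contra! hlt
  have hrows : (#{i | q ≤ #(crowded τ (2 * q) i)} + 1) * n ≤ 2 * q * n := by gcongr; omega
  have htimes : 10 * q * (2 * T) ≤ n * (7 * n) := by gcongr
  nlinarith

theorem exists_perms_forall_notMem_conflictFree (hq : 100000 ≤ q) (hqn : 10 * q ≤ n)
    (hn : n ≤ 11 * q) (hs : 2500 * s ≤ q) (hT : 2 * T ≤ 7 * n) :
    ∃ πs : Fin n → Equiv.Perm (Fin n),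
      ∀ d ∈ profiles (Fin n) n T (n * s), πs ∉ conflictFree (critTime d.1 d.2) := by
  refine exists_forall_notMem_of_card_mul_lt_one (c := ((9 / 10 : ℝ) ^ q) ^ (2 * q)) ?_
    (card_profiles_mul_pow_lt_one hq hn hs (by omega))
  intro d hd
  have hcrowded : 2 * q ≤ #{i | q ≤ #(crowded (critTime d.1 d.2) (2 * q) i)} :=
    two_mul_le_card_crowded (fun i ↦ (critTime_strictMono d.1 d.2 i).injective)
      (mem_profiles.1 hd).2.2 hqn hT
  have hratio : ((n - 2 * q : ℕ) : ℝ) ≤ 9 / 10 * (n - q : ℕ) := by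
    have : 10 * (n - 2 * q) ≤ 9 * (n - q) := by omega
    have : (10 * (n - 2 * q : ℕ) : ℝ) ≤ 9 * (n - q : ℕ) := by exact_mod_cast this
    linarith
  refine card_conflictFree_le ?_ (by norm_num) (by norm_num) ?_ hcrowded
  · rw [Fintype.card_fin]; omega
  · rwa [Fintype.card_fin]

end Numerics

/-- There is `n₁` such that for every `n ≥ n₁` there are
permutations `π₁,…,π_n` of `{1,…,n}` such that every feasible schedule (load at
most `1`) for the instance `I(π₁,…,π_n)` — which has congestion `C = n` and
dilation `D = 2n+3` — has makespan strictly greater than `(1+10⁻⁵)·(C+D)`. -/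
theorem exists_instance_beating_C_plus_D :
    ∃ n₁ : ℕ, ∀ n : ℕ, n₁ ≤ n →
      ∃ πs : Fin n → Equiv.Perm (Fin n),
        (lowerBoundInstance n πs).congestion = n ∧
        (lowerBoundInstance n πs).dilation = 2 * n + 3 ∧
        ∀ σ : Fin (lowerBoundInstance n πs).k → ℕ → ℕ,
          (lowerBoundInstance n πs).IsSchedule σ →
          (lowerBoundInstance n πs).LoadLE σ 1 →
          ∀ T : ℕ, (lowerBoundInstance n πs).CompletedBy σ T →
            (1 + 1 / 100000 : ℝ) * ((n : ℝ) + (2 * (n : ℝ) + 3)) < (T : ℝ) := by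
  refine ⟨1000000, fun n hn ↦ ?_⟩
  set s := 3 * (n + 1) / 100000 + 1
  obtain ⟨πs, hπs⟩ := exists_perms_forall_notMem_conflictFree (n := n) (q := n / 10) (s := s)
    (T := 3 * n + 2 + s) (by omega) (by omega) (by omega) (by omega) (by omega)
  refine ⟨πs, congestion_lowerBoundInstance (by omega), dilation_lowerBoundInstance (by omega),
    fun σ hσ hload T hT ↦ ?_⟩
  by_contra! hfast
  have hle : T ≤ 3 * n + 2 + s := by
    have : (100000 * T : ℝ) ≤ 100001 * (3 * n + 3) := by linarith
    have : 100000 * T ≤ 100001 * (3 * n + 3) := by exact_mod_cast this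
    omega
  obtain ⟨d, hd, hmem⟩ := exists_profile_mem_conflictFree (by omega) hσ hload (hT.mono hσ hle)
  exact hπs d hd hmem
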